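/- Let d ≥ 2 and r ∈ ℝ. If U : ℝ^d → ℝ is smooth, satisfies the homogeneous Klein–Gordon equation (∂₀² − Δ + r)U = 0, and vanishes on the half-space { x : x⁰ ≤ 0 }, then U is identically zero. -/

import Mathlib

/-!
The proof is a weighted energy estimate on space-time. Write `u₀ = ∂₀U`, `uₖ = ∂ₖU` and let
`e = (u₀² + ∑ uₖ² + U²) / 2` be the energy density. For a solution and any weight `ψ`,
`∂₀(ψ e) - ∑ ∂ₖ(ψ u₀ uₖ) = (∂₀ψ) e - u₀ ∑ (∂ₖψ) uₖ + (1 - r) ψ U u₀` (`div_identity`).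
The weight is `ψ = exp(-c t) h(q)` with `q = R² - 2 R t - |x|²`, where `h` is a smooth
nondecreasing function that is positive exactly on `(0, ∞)`, and `c = |1 - r| + 1`.
On `{q > 0, t ≥ 0}` one has `|x| ≤ R`, so the level sets of `q` are spacelike there and the
right-hand side is at most `-ψ e` (`flux_le`). As `U` vanishes for `t ≤ 0`, the fields `ψ e` and
`ψ u₀ uₖ` are supported in the compact set `{0 ≤ t, q ≥ 0}`; the left-hand side integrates to `0`,
whence `∫ ψ e ≤ 0` and `ψ e = 0` everywhere. Each point lies in `{q > 0}` once `R` is large.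
-/

open Real Set MeasureTheory

noncomputable section

/-- time derivative `∂₀U` of a function on ℝ^d = ℝ × ℝ^{d−1}. -/
def d0 {m : ℕ} (U : ℝ × (Fin m → ℝ) → ℝ) : ℝ × (Fin m → ℝ) → ℝ :=
  fun z => fderiv ℝ U z (1, 0)

/-- spatial derivative `∂ₖU`. -/
def dk {m : ℕ} (k : Fin m) (U : ℝ × (Fin m → ℝ) → ℝ) : ℝ × (Fin m → ℝ) → ℝ :=
  fun z => fderiv ℝ U z (0, Pi.single k 1)

/-- Klein–Gordon operator `∂₀² − Δ + r` with mass-squared `r`. -/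
def KG {m : ℕ} (r : ℝ) (U : ℝ × (Fin m → ℝ) → ℝ) : ℝ × (Fin m → ℝ) → ℝ :=
  fun z => d0 (d0 U) z - (∑ k, dk k (dk k U) z) + r * U z

/-- Minkowski form `η(z,w) = −z⁰w⁰ + z⃗·w⃗`. -/
def mink {m : ℕ} (z w : ℝ × (Fin m → ℝ)) : ℝ := -(z.1 * w.1) + ∑ k, z.2 k * w.2 k

/-- causal future `J⁺(S)`. -/
def Jplus {m : ℕ} (S : Set (ℝ × (Fin m → ℝ))) : Set (ℝ × (Fin m → ℝ)) :=
  {z | ∃ w ∈ S, mink (z - w) (z - w) ≤ 0 ∧ 0 ≤ z.1 - w.1}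

/-- causal past `J⁻(S)`. -/
def Jminus {m : ℕ} (S : Set (ℝ × (Fin m → ℝ))) : Set (ℝ × (Fin m → ℝ)) :=
  {z | ∃ w ∈ S, mink (z - w) (z - w) ≤ 0 ∧ 0 ≤ -(z.1 - w.1)}

/-- spatially compactly supported. -/
def SpatCompact {m : ℕ} (U : ℝ × (Fin m → ℝ) → ℝ) : Prop :=
  ∀ T > (0:ℝ), IsCompact (tsupport U ∩ (Icc (-T) T ×ˢ (univ : Set (Fin m → ℝ))))

/-- the symplectic form `σ_t(U,V) = ∫ (U ∂₀V − ∂₀U V)(t,x⃗) dx⃗`. -/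
def sigmaT {m : ℕ} (t : ℝ) (U V : ℝ × (Fin m → ℝ) → ℝ) : ℝ :=
  ∫ x : Fin m → ℝ, (U (t, x) * d0 V (t, x) - d0 U (t, x) * V (t, x))

section KGHelpers

variable {m : ℕ}

/-! ### Directional derivatives and their integrals -/

lemma fderiv_mul_dir {f g : ℝ × (Fin m → ℝ) → ℝ} (hf : Differentiable ℝ f)
    (hg : Differentiable ℝ g) (z v : ℝ × (Fin m → ℝ)) :
    fderiv ℝ (fun y => f y * g y) z v = fderiv ℝ f z v * g z + f z * fderiv ℝ g z v := by
  rw [fderiv_fun_mul (hf z) (hg z)]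
  simp [smul_eq_mul]
  ring

lemma contDiff_dir {f : ℝ × (Fin m → ℝ) → ℝ} (hf : ContDiff ℝ (⊤ : ℕ∞) f)
    (v : ℝ × (Fin m → ℝ)) : ContDiff ℝ (⊤ : ℕ∞) (fun z => fderiv ℝ f z v) :=
  (hf.fderiv_right (m := (⊤ : ℕ∞)) (by simp)).clm_apply contDiff_const

lemma contDiff_d0 {f : ℝ × (Fin m → ℝ) → ℝ} (hf : ContDiff ℝ (⊤ : ℕ∞) f) :
    ContDiff ℝ (⊤ : ℕ∞) (d0 f) := contDiff_dir hf _

lemma contDiff_dk {f : ℝ × (Fin m → ℝ) → ℝ} (hf : ContDiff ℝ (⊤ : ℕ∞) f) (k : Fin m) :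
    ContDiff ℝ (⊤ : ℕ∞) (dk k f) := contDiff_dir hf _

lemma d0_dk_comm {f : ℝ × (Fin m → ℝ) → ℝ} (hf : ContDiff ℝ (⊤ : ℕ∞) f) (k : Fin m)
    (z : ℝ × (Fin m → ℝ)) : d0 (dk k f) z = dk k (d0 f) z := by
  have hs : IsSymmSndFDerivAt ℝ f z :=
    hf.contDiffAt.isSymmSndFDerivAt (by simp; exact WithTop.coe_le_coe.2 le_top)
  have hd : DifferentiableAt ℝ (fderiv ℝ f) z :=
    ((hf.fderiv_right (m := (⊤ : ℕ∞)) (by simp)).differentiable (by simp)) z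
  have key : ∀ v w, fderiv ℝ (fun y => fderiv ℝ f y v) z w = fderiv ℝ (fderiv ℝ f) z w v := by
    intro v w
    rw [fderiv_clm_apply hd (differentiableAt_const v)]
    simp
  unfold d0 dk
  rw [key, key]
  exact hs _ _

lemma integral_fderiv_eq_zero {f : ℝ × (Fin m → ℝ) → ℝ} (hf : ContDiff ℝ (⊤ : ℕ∞) f)
    (hc : HasCompactSupport f) (v : ℝ × (Fin m → ℝ)) :
    Integrable (fun z => fderiv ℝ f z v) ∧ ∫ z, fderiv ℝ f z v = 0 := by
  have hi : Integrable (fun z => fderiv ℝ f z v) :=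
    (contDiff_dir hf v).continuous.integrable_of_hasCompactSupport (hc.fderiv_apply ℝ v)
  refine ⟨hi, ?_⟩
  have : (volume : Measure (ℝ × (Fin m → ℝ))).IsAddHaarMeasure :=
    Measure.prod.instIsAddHaarMeasure volume volume
  have h := integral_mul_fderiv_eq_neg_fderiv_mul_of_integrable (𝕜 := ℝ)
    (μ := (volume : Measure (ℝ × (Fin m → ℝ)))) (f := fun _ => (1 : ℝ)) (g := f) (v := v)
    (by simp) (by simpa using hi)
    (by simpa using hf.continuous.integrable_of_hasCompactSupport hc)
    (fun x _ => differentiableAt_const _) (fun x _ => hf.differentiable (by simp) x)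
  simpa using h

/-! ### Energy density and the divergence identity -/

/-- The energy density `((∂₀U)² + ∑ (∂ₖU)² + U²) / 2`. -/
def energy (U : ℝ × (Fin m → ℝ) → ℝ) (z : ℝ × (Fin m → ℝ)) : ℝ :=
  (d0 U z * d0 U z + ∑ k, dk k U z * dk k U z + U z * U z) * (1 / 2)

lemma contDiff_energy {U : ℝ × (Fin m → ℝ) → ℝ} (hU : ContDiff ℝ (⊤ : ℕ∞) U) :
    ContDiff ℝ (⊤ : ℕ∞) (energy U) := by
  have h0 := contDiff_d0 hU
  have hk := contDiff_dk hU
  unfold energy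
  fun_prop

lemma energy_nonneg (U : ℝ × (Fin m → ℝ) → ℝ) (z : ℝ × (Fin m → ℝ)) : 0 ≤ energy U z := by
  have : 0 ≤ ∑ k, dk k U z * dk k U z := Finset.sum_nonneg fun k _ => mul_self_nonneg _
  unfold energy
  nlinarith [mul_self_nonneg (d0 U z), mul_self_nonneg (U z)]

lemma d0_energy {U : ℝ × (Fin m → ℝ) → ℝ} (hU : ContDiff ℝ (⊤ : ℕ∞) U)
    (z : ℝ × (Fin m → ℝ)) :
    d0 (energy U) z = d0 U z * d0 (d0 U) z + ∑ k, dk k U z * d0 (dk k U) z + U z * d0 U z := by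
  have g : ∀ f : ℝ × (Fin m → ℝ) → ℝ, ContDiff ℝ (⊤ : ℕ∞) f → HasFDerivAt (fun y => f y * f y)
      (f z • fderiv ℝ f z + f z • fderiv ℝ f z) z := fun f hf =>
    ((hf.differentiable (by simp) z).hasFDerivAt).mul ((hf.differentiable (by simp) z).hasFDerivAt)
  have h := (((g _ (contDiff_d0 hU)).fun_add
    (HasFDerivAt.fun_sum (u := Finset.univ) fun k _ => g _ (contDiff_dk hU k))).fun_add
      (g _ hU)).mul_const (1 / 2 : ℝ)
  have h2 : d0 (energy U) z = _ := congrArg (fun L => L (1, 0)) h.fderiv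
  rw [h2]
  simp only [smul_apply, add_apply,
    sum_apply, smul_eq_mul, Finset.sum_add_distrib, d0]
  ring

/-- Divergence of the weighted energy current of a solution; the second derivatives of `U` cancel
by the equation and the symmetry of mixed partial derivatives. -/
lemma div_identity {r : ℝ} {U p : ℝ × (Fin m → ℝ) → ℝ} (hU : ContDiff ℝ (⊤ : ℕ∞) U)
    (hp : ContDiff ℝ (⊤ : ℕ∞) p) (heq : ∀ z, KG r U z = 0) (z : ℝ × (Fin m → ℝ)) :
    d0 (fun y => p y * energy U y) z - ∑ k, dk k (fun y => p y * (d0 U y * dk k U y)) z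
      = d0 p z * energy U z - d0 U z * ∑ k, dk k p z * dk k U z
        + (1 - r) * p z * (U z * d0 U z) := by
  have h0 := (contDiff_d0 hU).differentiable (by simp)
  have hk := fun k => (contDiff_dk hU k).differentiable (by simp)
  have hpd := hp.differentiable (by simp)
  have he := (contDiff_energy hU).differentiable (by simp)
  have e1 : d0 (fun y => p y * energy U y) z = d0 p z * energy U z + p z * d0 (energy U) z :=
    fderiv_mul_dir hpd he z _
  have e2 : ∀ k, dk k (fun y => p y * (d0 U y * dk k U y)) z = dk k p z * (d0 U z * dk k U z)
      + p z * (d0 (dk k U) z * dk k U z + d0 U z * dk k (dk k U) z) := by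
    intro k
    rw [d0_dk_comm hU]
    have a1 := fderiv_mul_dir hpd (h0.fun_mul (hk k)) z (0, Pi.single k 1)
    rw [fderiv_mul_dir h0 (hk k)] at a1
    exact a1
  have hz := heq z
  unfold KG at hz
  rw [e1, d0_energy hU, Finset.sum_congr rfl fun k _ => e2 k]
  simp only [mul_add, Finset.sum_add_distrib, Finset.mul_sum] at *
  have s1 : ∑ k, dk k p z * (d0 U z * dk k U z) = ∑ k, d0 U z * (dk k p z * dk k U z) :=
    Finset.sum_congr rfl fun k _ => by ring
  have s2 : ∑ k, p z * (d0 (dk k U) z * dk k U z) = ∑ k, p z * (dk k U z * d0 (dk k U) z) :=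
    Finset.sum_congr rfl fun k _ => by ring
  have s3 : ∑ k, p z * (d0 U z * dk k (dk k U) z)
      = p z * d0 U z * ∑ k, dk k (dk k U) z := by
    rw [Finset.mul_sum]; exact Finset.sum_congr rfl fun k _ => by ring
  rw [s1, s2, s3]
  linear_combination p z * d0 U z * hz

/-! ### The weight -/

/-- The phase `q(t, x) = R² - 2 R t - |x|²` of the weight. -/
def phase (R : ℝ) (z : ℝ × (Fin m → ℝ)) : ℝ := R ^ 2 - 2 * R * z.1 - ∑ k, z.2 k ^ 2

/-- The weight `exp(-c t) h(q)`, with `h = expNegInvGlue` smooth, nondecreasing, and positive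
exactly on `(0, ∞)`. -/
def weight (c R : ℝ) (z : ℝ × (Fin m → ℝ)) : ℝ :=
  Real.exp (-(c * z.1)) * expNegInvGlue (phase R z)

lemma hasFDerivAt_phase (R : ℝ) (z : ℝ × (Fin m → ℝ)) :
    HasFDerivAt (phase (m := m) R) (-((2 * R) • ContinuousLinearMap.fst ℝ ℝ (Fin m → ℝ))
      - ∑ k, (2 * z.2 k) • ((ContinuousLinearMap.proj (R := ℝ) (φ := fun _ : Fin m => ℝ) k).comp
        (ContinuousLinearMap.snd ℝ ℝ (Fin m → ℝ)))) z := by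
  have h1 : HasFDerivAt (fun y : ℝ × (Fin m → ℝ) => R ^ 2 - 2 * R * y.1)
      (-((2 * R) • ContinuousLinearMap.fst ℝ ℝ (Fin m → ℝ))) z :=
    ((hasFDerivAt_fst (𝕜 := ℝ) (p := z)).const_mul (2 * R)).const_sub (R ^ 2)
  have h2 : ∀ k : Fin m, HasFDerivAt (fun y : ℝ × (Fin m → ℝ) => y.2 k ^ 2)
      ((2 * z.2 k) • ((ContinuousLinearMap.proj (R := ℝ) (φ := fun _ : Fin m => ℝ) k).comp
        (ContinuousLinearMap.snd ℝ ℝ (Fin m → ℝ)))) z := by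
    intro k
    have := (((ContinuousLinearMap.proj (R := ℝ) (φ := fun _ : Fin m => ℝ) k).comp
        (ContinuousLinearMap.snd ℝ ℝ (Fin m → ℝ))).hasFDerivAt (x := z)).pow 2
    simpa using this
  exact h1.fun_sub (HasFDerivAt.fun_sum fun k _ => h2 k)

lemma contDiff_phase (R : ℝ) : ContDiff ℝ (⊤ : ℕ∞) (phase (m := m) R) := by
  unfold phase
  fun_prop

lemma contDiff_weight (c R : ℝ) : ContDiff ℝ (⊤ : ℕ∞) (weight (m := m) c R) := by
  have h1 := contDiff_phase (m := m) R
  have h2 : ContDiff ℝ (⊤ : ℕ∞) (fun z : ℝ × (Fin m → ℝ) => expNegInvGlue (phase R z)) :=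
    expNegInvGlue.contDiff.comp h1
  unfold weight
  fun_prop

lemma weight_nonneg (c R : ℝ) (z : ℝ × (Fin m → ℝ)) : 0 ≤ weight c R z :=
  mul_nonneg (Real.exp_pos _).le (expNegInvGlue.nonneg _)

lemma fderiv_weight (c R : ℝ) (z v : ℝ × (Fin m → ℝ)) :
    fderiv ℝ (weight c R) z v = -(c * v.1) * weight c R z
      + Real.exp (-(c * z.1)) * deriv expNegInvGlue (phase R z)
        * (-(2 * R * v.1) - ∑ k, 2 * z.2 k * v.2 k) := by
  have hh : HasDerivAt expNegInvGlue (deriv expNegInvGlue (phase R z)) (phase R z) :=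
    ((expNegInvGlue.contDiff (n := 1)).differentiable (by simp) _).hasDerivAt
  have h1 : HasFDerivAt (fun y : ℝ × (Fin m → ℝ) => -(c * y.1))
      (-(c • ContinuousLinearMap.fst ℝ ℝ (Fin m → ℝ))) z :=
    ((hasFDerivAt_fst (𝕜 := ℝ) (p := z)).const_mul c).fun_neg
  have h2 := hh.comp_hasFDerivAt z (hasFDerivAt_phase R z)
  have h3 : fderiv ℝ (weight c R) z = _ := (h1.exp.fun_mul h2).fderiv
  rw [h3]
  simp [weight]
  ring

/-- Every point `s ≤ 0` is a minimum of the glueing function. -/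
lemma deriv_glue_of_nonpos {s : ℝ} (hs : s ≤ 0) : deriv expNegInvGlue s = 0 := by
  apply IsLocalMin.deriv_eq_zero
  refine Filter.Eventually.of_forall fun y => ?_
  rw [expNegInvGlue.zero_of_nonpos hs]
  exact expNegInvGlue.nonneg y

/-! ### The energy estimate -/

/-- The energy flux through the level sets of the weight has a sign for `t ≥ 0`; here `|x| ≤ R`
wherever the derivative of the glueing function is nonzero. -/
lemma flux_le {r R : ℝ} (hR : 0 < R) (U : ℝ × (Fin m → ℝ) → ℝ) (z : ℝ × (Fin m → ℝ))
    (hz : 0 ≤ z.1) :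
    d0 (weight (|1 - r| + 1) R) z * energy U z
        - d0 U z * ∑ k, dk k (weight (|1 - r| + 1) R) z * dk k U z
        + (1 - r) * weight (|1 - r| + 1) R z * (U z * d0 U z)
      ≤ -(weight (|1 - r| + 1) R z * energy U z) := by
  set c := |1 - r| + 1 with hc
  set H := Real.exp (-(c * z.1)) * deriv expNegInvGlue (phase R z) with hH
  set w := weight c R z with hw
  have hw0 : 0 ≤ w := weight_nonneg c R z
  have e0 : d0 (weight c R) z = -c * w - 2 * R * H := by
    unfold d0
    rw [fderiv_weight]
    simp
    ring
  have ek : ∀ k, dk k (weight c R) z = -2 * H * z.2 k := by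
    intro k
    unfold dk
    rw [fderiv_weight]
    simp [Pi.single_apply]
    ring
  set a := d0 U z with ha
  set S := ∑ k, dk k U z * dk k U z with hS
  set X := ∑ k, z.2 k * dk k U z with hX
  have hS0 : 0 ≤ S := Finset.sum_nonneg fun k _ => mul_self_nonneg _
  have hsum : ∑ k, dk k (weight c R) z * dk k U z = -2 * H * X := by
    rw [hX, Finset.mul_sum]
    exact Finset.sum_congr rfl fun k _ => by rw [ek]; ring
  have hen : energy U z = (a * a + S + U z * U z) * (1 / 2) := rfl
  have hCS : X ^ 2 ≤ (∑ k, z.2 k ^ 2) * S := by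
    have := Finset.sum_mul_sq_le_sq_mul_sq Finset.univ z.2 (fun k => dk k U z)
    simpa [hX, hS, sq] using this
  have hflux : H * (2 * a * X) ≤ H * (2 * R * energy U z) := by
    rcases le_or_gt (phase R z) 0 with hq | hq
    · simp [hH, deriv_glue_of_nonpos hq]
    · have hH0 : 0 ≤ H := mul_nonneg (Real.exp_pos _).le expNegInvGlue.monotone.deriv_nonneg
      apply mul_le_mul_of_nonneg_left _ hH0
      have hx : ∑ k, z.2 k ^ 2 ≤ R ^ 2 := by
        unfold phase at hq
        nlinarith [mul_nonneg hR.le hz]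
      have hX2 : X ^ 2 ≤ R ^ 2 * S := hCS.trans (mul_le_mul_of_nonneg_right hx hS0)
      have : R * (2 * a * X) ≤ R * (2 * R * energy U z) := by
        rw [hen]
        nlinarith [sq_nonneg (R * a - X), mul_nonneg (sq_nonneg R) (mul_self_nonneg (U z))]
      exact le_of_mul_le_mul_left this hR
  have hmass : (1 - r) * (U z * a) ≤ |1 - r| * energy U z := by
    have h1 : (1 - r) * (U z * a) ≤ |1 - r| * |U z * a| := by
      rw [← abs_mul]; exact le_abs_self _
    refine h1.trans (mul_le_mul_of_nonneg_left ?_ (abs_nonneg _))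
    rw [hen, abs_le]
    constructor <;> nlinarith [sq_nonneg (U z + a), sq_nonneg (U z - a)]
  have hm := mul_le_mul_of_nonneg_left hmass hw0
  rw [e0, hsum]
  have : c * (w * energy U z) = w * (|1 - r| * energy U z) + w * energy U z := by
    rw [hc]; ring
  nlinarith

lemma hasCompactSupport_weight_mul {c R : ℝ} (hR : 0 < R) {f : ℝ × (Fin m → ℝ) → ℝ}
    (hf : ∀ z, z.1 < 0 → f z = 0) : HasCompactSupport (fun z => weight c R z * f z) := by
  refine HasCompactSupport.intro
    ((isCompact_Icc (a := (0 : ℝ)) (b := R)).prod (isCompact_univ_pi fun _ : Fin m =>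
      isCompact_Icc (a := -R) (b := R))) ?_
  intro z hz
  rcases lt_or_ge z.1 0 with h | h
  · simp [hf z h]
  · have hq : phase R z ≤ 0 := by
      by_contra! hq
      apply hz
      unfold phase at hq
      have hs : 0 ≤ ∑ k, z.2 k ^ 2 := Finset.sum_nonneg fun k _ => sq_nonneg _
      have ht := mul_nonneg hR.le h
      refine ⟨⟨h, by nlinarith⟩, fun k _ => ?_⟩
      have hk : z.2 k ^ 2 ≤ ∑ k, z.2 k ^ 2 :=
        Finset.single_le_sum (f := fun k => z.2 k ^ 2) (fun k _ => sq_nonneg _) (Finset.mem_univ k)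
      exact abs_le.mp (abs_le_of_sq_le_sq (by nlinarith) hR.le)
    simp [weight, expNegInvGlue.zero_of_nonpos hq]

lemma weight_mul_energy_eq_zero {r R : ℝ} (hR : 0 < R) {U : ℝ × (Fin m → ℝ) → ℝ}
    (hU : ContDiff ℝ (⊤ : ℕ∞) U) (heq : ∀ z, KG r U z = 0)
    (hzero : ∀ z : ℝ × (Fin m → ℝ), z.1 ≤ 0 → U z = 0) (z : ℝ × (Fin m → ℝ)) :
    weight (|1 - r| + 1) R z * energy U z = 0 := by
  set p : ℝ × (Fin m → ℝ) → ℝ := weight (|1 - r| + 1) R with hpdef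
  have hp : ContDiff ℝ (⊤ : ℕ∞) p := contDiff_weight _ R
  have hfd : ∀ y : ℝ × (Fin m → ℝ), y.1 < 0 → fderiv ℝ U y = 0 := by
    intro y hy
    have : U =ᶠ[nhds y] fun _ => 0 := by
      filter_upwards [(isOpen_lt continuous_fst continuous_const).mem_nhds hy] with x hx
      exact hzero x (le_of_lt hx)
    rw [this.fderiv_eq]
    simp
  have h0 : ∀ y : ℝ × (Fin m → ℝ), y.1 < 0 → d0 U y = 0 := fun y hy => by simp [d0, hfd y hy]
  have hk : ∀ k, ∀ y : ℝ × (Fin m → ℝ), y.1 < 0 → dk k U y = 0 :=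
    fun k y hy => by simp [dk, hfd y hy]
  have hen : ∀ y : ℝ × (Fin m → ℝ), y.1 < 0 → energy U y = 0 := fun y hy => by
    simp [energy, h0 y hy, hk _ y hy, hzero y hy.le]
  have hpe : ContDiff ℝ (⊤ : ℕ∞) (fun y => p y * energy U y) := hp.mul (contDiff_energy hU)
  have hcs : HasCompactSupport (fun y => p y * energy U y) := hasCompactSupport_weight_mul hR hen
  have I0 := integral_fderiv_eq_zero hpe hcs (1, 0)
  have Ik := fun k => integral_fderiv_eq_zero
    (hp.mul ((contDiff_d0 hU).mul (contDiff_dk hU k)))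
    (hasCompactSupport_weight_mul (c := |1 - r| + 1) hR (f := fun y => d0 U y * dk k U y)
      fun y hy => by simp [h0 y hy]) (0, Pi.single k 1)
  have hdiv : ∫ y, (d0 (fun y => p y * energy U y) y
      - ∑ k, dk k (fun y => p y * (d0 U y * dk k U y)) y) = 0 := by
    have i0 : Integrable (fun y => d0 (fun y => p y * energy U y) y) := I0.1
    have ik : ∀ k, Integrable (fun y => dk k (fun y => p y * (d0 U y * dk k U y)) y) :=
      fun k => (Ik k).1
    have a0 : ∫ y, d0 (fun y => p y * energy U y) y = 0 := I0.2
    have ak : ∀ k, ∫ y, dk k (fun y => p y * (d0 U y * dk k U y)) y = 0 := fun k => (Ik k).2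
    rw [integral_sub i0 (integrable_finsetSum _ fun k _ => ik k),
      integral_finsetSum _ fun k _ => ik k]
    simp [a0, ak]
  have hle : ∀ y, d0 (fun y => p y * energy U y) y
      - ∑ k, dk k (fun y => p y * (d0 U y * dk k U y)) y ≤ -(p y * energy U y) := by
    intro y
    rw [div_identity hU hp heq]
    rcases lt_or_ge y.1 0 with hy | hy
    · simp [hen y hy, h0 y hy]
    · exact flux_le hR U y hy
  have hint : Integrable (fun y => p y * energy U y) :=
    hpe.continuous.integrable_of_hasCompactSupport hcs
  have hmono := integral_mono (I0.1.sub (integrable_finsetSum _ fun k _ => (Ik k).1))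
    hint.neg hle
  have hmono' : (0 : ℝ) ≤ -∫ y, p y * energy U y := by
    rw [← integral_neg, ← hdiv]
    exact hmono
  by_contra hne
  have := hpe.continuous.integral_pos_of_hasCompactSupport_nonneg_nonzero
    (μ := (volume : Measure (ℝ × (Fin m → ℝ)))) hcs
    (fun y => mul_nonneg (weight_nonneg _ _ _) (energy_nonneg U y)) hne
  linarith

end KGHelpers

/-- a smooth solution of the homogeneous Klein–Gordon equation which
vanishes on the half-space `x⁰ ≤ 0` vanishes identically. -/
theorem kg_vanishing_half_space (d : ℕ) (hd : 2 ≤ d) (r : ℝ)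
    (U : ℝ × (Fin (d-1) → ℝ) → ℝ)
    (hU : ContDiff ℝ (⊤ : ℕ∞) U) (heq : ∀ z, KG r U z = 0)
    (hzero : ∀ z : ℝ × (Fin (d-1) → ℝ), z.1 ≤ 0 → U z = 0) :
    ∀ z, U z = 0 := by
  intro z
  set s := ∑ k, z.2 k ^ 2 with hs
  have hs0 : 0 ≤ s := Finset.sum_nonneg fun k _ => sq_nonneg _
  -- any `R ≥ 1` with `R > 2 t + |x|²` puts `z` in the region where the weight is positive
  obtain ⟨R, hR1, hR2⟩ : ∃ R : ℝ, 1 ≤ R ∧ 2 * z.1 + s + 1 ≤ R :=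
    ⟨max 1 (2 * z.1 + s + 1), le_max_left _ _, le_max_right _ _⟩
  have hR : 0 < R := by linarith
  have hq : 0 < phase R z := by
    unfold phase
    nlinarith [mul_nonneg hR.le (sub_nonneg.2 hR2), mul_nonneg (sub_nonneg.2 hR1) hs0]
  have hw : 0 < weight (|1 - r| + 1) R z :=
    mul_pos (Real.exp_pos _) (expNegInvGlue.pos_of_pos hq)
  have he : energy U z = 0 :=
    (mul_eq_zero.mp (weight_mul_energy_eq_zero hR hU heq hzero z)).resolve_left hw.ne'
  have hS : 0 ≤ ∑ k, dk k U z * dk k U z := Finset.sum_nonneg fun k _ => mul_self_nonneg _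
  unfold energy at he
  exact mul_self_eq_zero.mp
    (le_antisymm (by nlinarith [mul_self_nonneg (d0 U z)]) (mul_self_nonneg _))
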